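/- arXiv:2408.05730 — 3 statements merged into one kernel-verified Lean document; each statement's English description precedes it below -/
import Mathlib

section
/- The minimal number of Pauli settings for two-body overlapping tomography of four qubits is exactly nine: φ₂(4) = 9. That is, there exists a set of 9 functions f : Fin 4 → Fin 3 such that for every pair of distinct indices i ≠ j and every pair of values (a, b) ∈ Fin 3 × Fin 3 some f in the set satisfies f i = a and f j = b, and no set of fewer than 9 such functions has this property. -/
/-!
The lower bound is a pigeonhole count: for two fixed positions, `f ↦ (f i, f j)` maps a covering
family onto the nine elements of `Fin 3 × Fin 3` (`nine_le_card`). It is attained by the linear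
orthogonal array over `𝔽₃` whose rows are `(x, y, x + y, x + 2y)`: any two of these linear forms
are independent, so every pair of values occurs in every pair of columns (`covers_oaRow`).
-/

/-- `phi2 n` is the minimal cardinality of a set `S` of functions `Fin n → Fin 3`
such that for every pair of distinct indices `i ≠ j` and every pair of values
`(a, b) ∈ Fin 3 × Fin 3` some `f ∈ S` has `f i = a` and `f j = b`
(the covering array number `CAN(2, n, 3)`). -/
noncomputable def phi2 (n : ℕ) : ℕ :=
  sInf {N : ℕ | ∃ S : Finset (Fin n → Fin 3), S.card = N ∧
    ∀ i j : Fin n, i ≠ j → ∀ a b : Fin 3, ∃ f ∈ S, f i = a ∧ f j = b}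

/-- Row `(x, y, x + y, x + 2y)` of the orthogonal array, with `Fin 3` carrying its arithmetic
modulo 3. It is also the codeword of `(x, y)` in the ternary tetracode. -/
def oaRow (p : Fin 3 × Fin 3) : Fin 4 → Fin 3 :=
  ![p.1, p.2, p.1 + p.2, p.1 + 2 * p.2]

lemma oaRow_injective : Function.Injective oaRow := fun _ _ h =>
  Prod.ext (congrFun h 0) (congrFun h 1)

lemma covers_oaRow : ∀ i j : Fin 4, i ≠ j → ∀ a b : Fin 3,
    ∃ p, oaRow p i = a ∧ oaRow p j = b := by
  decide

lemma nine_le_card {n : ℕ} {i j : Fin n} {S : Finset (Fin n → Fin 3)}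
    (hS : ∀ a b : Fin 3, ∃ f ∈ S, f i = a ∧ f j = b) : 9 ≤ S.card := by
  have h : (Finset.univ : Finset (Fin 3 × Fin 3)).card ≤ S.card := by
    refine Finset.card_le_card_of_surjOn (fun f => (f i, f j)) ?_
    rintro ⟨a, b⟩ -
    obtain ⟨f, hf, rfl, rfl⟩ := hS a b
    exact ⟨f, hf, rfl⟩
  simpa using h

/-- The minimal number of Pauli settings for two-body overlapping tomography of
four qubits is exactly nine: `φ₂(4) = 9`. -/
theorem phi2_four : phi2 4 = 9 := by
  refine IsLeast.csInf_eq ⟨⟨Finset.univ.image oaRow, ?_, fun i j hij a b => ?_⟩, ?_⟩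
  · simp [Finset.card_image_of_injective _ oaRow_injective]
  · obtain ⟨p, hp⟩ := covers_oaRow i j hij a b
    exact ⟨oaRow p, Finset.mem_image_of_mem _ (Finset.mem_univ p), hp⟩
  · rintro _ ⟨S, rfl, hS⟩
    exact nine_le_card (hS 0 1 (by decide))
end

section
/- The minimal number of Pauli settings for two-body overlapping tomography of six qubits is exactly twelve: φ₂(6) = 12. That is, 12 functions f : Fin 6 → Fin 3 suffice so that every ordered pair of distinct indices and every pair of values in Fin 3 is realized by some function in the set, and no 11 functions suffice. -/
/-- Every pair of distinct columns shows every pair of values on some row in `S`. -/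
def PairCovering {n : ℕ} (S : Finset (Fin n → Fin 3)) : Prop :=
  ∀ i j : Fin n, i ≠ j → ∀ a b : Fin 3, ∃ f ∈ S, f i = a ∧ f j = b

/-- The rows on which column `c` shows the value `s`. -/
def rowsWith {n : ℕ} (S : Finset (Fin n → Fin 3)) (c : Fin n) (s : Fin 3) :
    Finset (Fin n → Fin 3) :=
  S.filter fun f => f c = s

lemma mem_rowsWith {n : ℕ} {S : Finset (Fin n → Fin 3)} {c : Fin n} {s : Fin 3}
    {f : Fin n → Fin 3} : f ∈ rowsWith S c s ↔ f ∈ S ∧ f c = s := by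
  simp [rowsWith]

lemma exists_rare_value {n : ℕ} {S : Finset (Fin n → Fin 3)} (hS : S.card ≤ 11) (c : Fin n) :
    ∃ s, (rowsWith S c s).card ≤ 3 := by
  by_contra! h
  have h1 : S.card = ∑ s : Fin 3, (rowsWith S c s).card :=
    Finset.card_eq_sum_card_fiberwise (f := fun f : Fin n → Fin 3 => f c) fun _ _ =>
      Finset.mem_coe.2 (Finset.mem_univ _)
  have h2 := h 0
  have h3 := h 1
  have h4 := h 2
  rw [Fin.sum_univ_three] at h1
  omega

lemma image_rowsWith {n : ℕ} {S : Finset (Fin n → Fin 3)} (hcov : PairCovering S) {c d : Fin n}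
    (hcd : c ≠ d) (s : Fin 3) : (rowsWith S c s).image (fun f => f d) = Finset.univ := by
  ext b
  obtain ⟨f, hf, h1, h2⟩ := hcov c d hcd s b
  simp only [Finset.mem_image, Finset.mem_univ, iff_true]
  exact ⟨f, mem_rowsWith.2 ⟨hf, h1⟩, h2⟩

lemma three_le_card_rowsWith {n : ℕ} {S : Finset (Fin n → Fin 3)} (hcov : PairCovering S)
    {c d : Fin n} (hcd : c ≠ d) (s : Fin 3) : 3 ≤ (rowsWith S c s).card := by
  have h : ((rowsWith S c s).image fun f => f d).card = 3 := by simp [image_rowsWith hcov hcd]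
  exact h.ge.trans Finset.card_image_le

/-- A column takes pairwise distinct values on the at most three rows of a rare value of another
column, since it takes all three values there. -/
lemma rare_injOn {n : ℕ} {S : Finset (Fin n → Fin 3)} (hcov : PairCovering S) {c d : Fin n}
    (hcd : c ≠ d) {s : Fin 3} (hs : (rowsWith S c s).card ≤ 3) {f g : Fin n → Fin 3}
    (hf : f ∈ rowsWith S c s) (hg : g ∈ rowsWith S c s) (h : f d = g d) : f = g := by
  have h1 : ((rowsWith S c s).image fun f => f d).card = (rowsWith S c s).card := by
    refine le_antisymm Finset.card_image_le ?_
    simpa [image_rowsWith hcov hcd] using hs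
  exact Finset.card_image_iff.1 h1 hf hg h

/-- The lines `R i`, `R j`, `R k` form a triangle with the distinct vertices `a ∈ R i ∩ R j`,
`b ∈ R i ∩ R k` and `c ∈ R j ∩ R k`. -/
structure IsTriangle {α ι : Type*} (R : ι → Finset α) (i j k : ι) (a b c : α) : Prop where
  hij : i ≠ j
  hik : i ≠ k
  hjk : j ≠ k
  hab : a ≠ b
  hac : a ≠ c
  hbc : b ≠ c
  hai : a ∈ R i
  haj : a ∈ R j
  hbi : b ∈ R i
  hbk : b ∈ R k
  hcj : c ∈ R j
  hck : c ∈ R k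

namespace IsTriangle

variable {α ι : Type*} {R : ι → Finset α} {i j k : ι} {a b c : α}

lemma swap_left (h : IsTriangle R i j k a b c) : IsTriangle R j i k a c b :=
  ⟨h.hij.symm, h.hjk, h.hik, h.hac, h.hab, h.hbc.symm, h.haj, h.hai, h.hcj, h.hck, h.hbi, h.hbk⟩

lemma swap_right (h : IsTriangle R i j k a b c) : IsTriangle R i k j b a c :=
  ⟨h.hik, h.hij, h.hjk.symm, h.hab.symm, h.hbc, h.hac, h.hbi, h.hbk, h.hai, h.haj, h.hck, h.hcj⟩

end IsTriangle

/-- A set of at most three points has at most one point besides two given ones. -/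
lemma eq_of_card_le_three {α : Type*} [DecidableEq α] {P : Finset α} (hP : P.card ≤ 3)
    {b c x y : α} (hb : b ∈ P) (hc : c ∈ P) (hx : x ∈ P) (hy : y ∈ P) (hbc : b ≠ c)
    (hxb : x ≠ b) (hxc : x ≠ c) (hyb : y ≠ b) (hyc : y ≠ c) : x = y := by
  by_contra hxy
  have hsub : ({b, c, x, y} : Finset α) ⊆ P := by
    intro z hz
    simp only [Finset.mem_insert, Finset.mem_singleton] at hz
    rcases hz with rfl | rfl | rfl | rfl <;> assumption
  have h4 : ({b, c, x, y} : Finset α).card = 4 := by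
    simp [Finset.card_insert_of_notMem, hbc, hxy, Ne.symm hxb, Ne.symm hxc, Ne.symm hyb,
      Ne.symm hyc]
  have := Finset.card_le_card hsub
  omega

/-- The combinatorial core: if lines have at most three points each, any two of them meet in exactly
one point, and every line outside a triangle passes through a vertex of it, then any three of at
least five lines are concurrent. -/
lemma no_triangle {α ι : Type*} [DecidableEq α] (R : ι → Finset α)
    (hcard : ∀ i, (R i).card ≤ 3)
    (hmeet : ∀ i j, i ≠ j → ∃ x, x ∈ R i ∧ x ∈ R j)
    (huniq : ∀ i j, i ≠ j → ∀ x y, x ∈ R i → x ∈ R j → y ∈ R i → y ∈ R j → x = y)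
    (htri : ∀ i j k a b c, IsTriangle R i j k a b c → ∀ l, i ≠ l → j ≠ l → k ≠ l →
      a ∈ R l ∨ b ∈ R l ∨ c ∈ R l)
    {i j k l m : ι} (hij : i ≠ j) (hik : i ≠ k) (hjk : j ≠ k) (hil : i ≠ l) (hjl : j ≠ l)
    (hkl : k ≠ l) (him : i ≠ m) (hjm : j ≠ m) (hkm : k ≠ m) (hlm : l ≠ m)
    {a : α} (hai : a ∈ R i) (haj : a ∈ R j) : a ∈ R k := by
  by_contra hak
  -- Two further lines cannot pass through the same vertex `a`: both would contain the third
  -- point of the opposite side `R k`.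
  have same : ∀ i j k a b c, IsTriangle R i j k a b c → i ≠ l → j ≠ l → k ≠ l →
      i ≠ m → j ≠ m → k ≠ m → a ∈ R l → a ∈ R m → False := by
    intro i j k a b c t hil hjl hkl him hjm hkm hal ham
    obtain ⟨x, hxk, hxl⟩ := hmeet k l hkl
    obtain ⟨y, hyk, hym⟩ := hmeet k m hkm
    have hxb : x ≠ b := by rintro rfl; exact t.hab (huniq i l hil _ _ t.hai hal t.hbi hxl)
    have hxc : x ≠ c := by rintro rfl; exact t.hac (huniq j l hjl _ _ t.haj hal t.hcj hxl)
    have hyb : y ≠ b := by rintro rfl; exact t.hab (huniq i m him _ _ t.hai ham t.hbi hym)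
    have hyc : y ≠ c := by rintro rfl; exact t.hac (huniq j m hjm _ _ t.haj ham t.hcj hym)
    obtain rfl := eq_of_card_le_three (hcard k) t.hbk t.hck hxk hyk t.hbc hxb hxc hyb hyc
    obtain rfl := huniq l m hlm _ _ hal ham hxl hym
    exact t.hab (huniq i k t.hik _ _ t.hai hxk t.hbi t.hbk)
  -- If `R l` and `R m` pass through different vertices `a` and `b`, then `R m` misses all
  -- vertices of the triangle formed by `R j`, `R k` and `R l`.
  have diff : ∀ i j k a b c, IsTriangle R i j k a b c → i ≠ l → j ≠ l → k ≠ l →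
      i ≠ m → j ≠ m → k ≠ m → a ∈ R l → b ∈ R m → False := by
    intro i j k a b c t hil hjl hkl him hjm hkm hal hbm
    obtain ⟨y, hyk, hyl⟩ := hmeet k l hkl
    have hcy : c ≠ y := by rintro rfl; exact t.hac (huniq j l hjl _ _ t.haj hal t.hcj hyl)
    have hay : a ≠ y := by rintro rfl; exact t.hac (huniq j k t.hjk _ _ t.haj hyk t.hcj t.hck)
    have t' : IsTriangle R j k l c a y :=
      ⟨t.hjk, hjl, hkl, t.hac.symm, hcy, hay, t.hcj, t.hck, t.haj, hal, hyk, hyl⟩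
    rcases htri _ _ _ _ _ _ t' m hjm hkm hlm with h | h | h
    · exact t.hbc (huniq k m hkm _ _ t.hbk hbm t.hck h)
    · exact t.hab (huniq i m him _ _ t.hai h t.hbi hbm)
    · obtain rfl := huniq k m hkm _ _ t.hbk hbm hyk h
      exact t.hab (huniq i l hil _ _ t.hai hal t.hbi hyl)
  have key : ∀ i j k a b c, IsTriangle R i j k a b c → i ≠ l → j ≠ l → k ≠ l →
      i ≠ m → j ≠ m → k ≠ m → a ∈ R l → False := by
    intro i j k a b c t hil hjl hkl him hjm hkm hal
    rcases htri _ _ _ _ _ _ t m him hjm hkm with h | h | h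
    · exact same _ _ _ _ _ _ t hil hjl hkl him hjm hkm hal h
    · exact diff _ _ _ _ _ _ t hil hjl hkl him hjm hkm hal h
    · exact diff _ _ _ _ _ _ t.swap_left hjl hil hkl hjm him hkm hal h
  obtain ⟨b, hbi, hbk⟩ := hmeet i k hik
  obtain ⟨c, hcj, hck⟩ := hmeet j k hjk
  have hab : a ≠ b := by rintro rfl; exact hak hbk
  have hac : a ≠ c := by rintro rfl; exact hak hck
  have hbc : b ≠ c := by rintro rfl; exact hab (huniq i j hij _ _ hai haj hbi hcj)
  have t : IsTriangle R i j k a b c := ⟨hij, hik, hjk, hab, hac, hbc, hai, haj, hbi, hbk, hcj, hck⟩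
  rcases htri _ _ _ _ _ _ t l hil hjl hkl with h | h | h
  · exact key _ _ _ _ _ _ t hil hjl hkl him hjm hkm h
  · exact key _ _ _ _ _ _ t.swap_right hil hkl hjl him hkm hjm h
  · exact key _ _ _ _ _ _ t.swap_left.swap_right hjl hkl hil hjm hkm him h

/-- Six lines through a common point `x` with two further points each, all distinct, cover
`1 + 6 * 2` points. -/
lemma card_of_concurrent {α : Type*} [DecidableEq α] (R : Fin 6 → Finset α) (x : α)
    (hcard : ∀ i, 3 ≤ (R i).card) (hx : ∀ i, x ∈ R i)
    (huniq : ∀ i j, i ≠ j → ∀ y, y ∈ R i → y ∈ R j → y = x)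
    {S : Finset α} (hS : ∀ i, R i ⊆ S) : 13 ≤ S.card := by
  have hdisj : Set.PairwiseDisjoint (Finset.univ : Finset (Fin 6)) fun i => (R i).erase x := by
    intro i _ j _ hij
    refine Finset.disjoint_left.2 fun y hy hy' => ?_
    rw [Finset.mem_erase] at hy hy'
    exact hy.1 (huniq i j hij y hy.2 hy'.2)
  have h1 := Finset.card_biUnion hdisj
  have h2 : ∑ _i : Fin 6, 2 ≤ ∑ i : Fin 6, ((R i).erase x).card := by
    refine Finset.sum_le_sum fun i _ => ?_
    rw [Finset.card_erase_of_mem (hx i)]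
    have := hcard i
    omega
  have h3 : (Finset.univ.biUnion fun i => (R i).erase x) ⊆ S.erase x := by
    refine Finset.biUnion_subset.2 fun i _ => Finset.erase_subset_erase _ (hS i)
  have h4 := Finset.card_le_card h3
  have h5 : (S.erase x).card + 1 = S.card := Finset.card_erase_add_one (hS 0 (hx 0))
  simp only [Finset.sum_const, Finset.card_univ, Fintype.card_fin, smul_eq_mul] at h2
  omega

lemma lower_bound {S : Finset (Fin 6 → Fin 3)} (hcov : PairCovering S) : 12 ≤ S.card := by
  by_contra! hlt
  have hS : S.card ≤ 11 := by omega
  choose s hs using exists_rare_value hS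
  set R : Fin 6 → Finset (Fin 6 → Fin 3) := fun c => rowsWith S c (s c) with hR
  have hval : ∀ {c f}, f ∈ R c → f c = s c := fun h => (mem_rowsWith.1 h).2
  have hmeet : ∀ i j, i ≠ j → ∃ x, x ∈ R i ∧ x ∈ R j := by
    intro i j hij
    obtain ⟨f, hf, h1, h2⟩ := hcov i j hij (s i) (s j)
    exact ⟨f, mem_rowsWith.2 ⟨hf, h1⟩, mem_rowsWith.2 ⟨hf, h2⟩⟩
  have hinj : ∀ i j, i ≠ j → ∀ x y, x ∈ R i → y ∈ R i → x ≠ y → x j ≠ y j :=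
    fun i j hij x y hx hy hxy h => hxy (rare_injOn hcov hij (hs i) hx hy h)
  have huniq : ∀ i j, i ≠ j → ∀ x y, x ∈ R i → x ∈ R j → y ∈ R i → y ∈ R j → x = y := by
    intro i j hij x y hxi hxj hyi hyj
    exact rare_injOn hcov hij (hs i) hxi hyi ((hval hxj).trans (hval hyj).symm)
  have htri : ∀ i j k a b c, IsTriangle R i j k a b c → ∀ l, i ≠ l → j ≠ l → k ≠ l →
      a ∈ R l ∨ b ∈ R l ∨ c ∈ R l := by
    intro i j k a b c t l hil hjl hkl
    have h1 := hinj i l hil a b t.hai t.hbi t.hab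
    have h2 := hinj j l hjl a c t.haj t.hcj t.hac
    have h3 := hinj k l hkl b c t.hbk t.hck t.hbc
    have hsurj : ∀ u v w t : Fin 3, u ≠ v → u ≠ w → v ≠ w → u = t ∨ v = t ∨ w = t := by decide
    exact (hsurj _ _ _ (s l) h1 h2 h3).imp (fun h => mem_rowsWith.2 ⟨(mem_rowsWith.1 t.hai).1, h⟩)
      (Or.imp (fun h => mem_rowsWith.2 ⟨(mem_rowsWith.1 t.hbi).1, h⟩)
        fun h => mem_rowsWith.2 ⟨(mem_rowsWith.1 t.hcj).1, h⟩)
  obtain ⟨x, hx0, hx1⟩ := hmeet 0 1 (by decide)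
  have hx : ∀ k, x ∈ R k := by
    intro k
    by_cases h0 : 0 = k
    · exact h0 ▸ hx0
    by_cases h1 : 1 = k
    · exact h1 ▸ hx1
    obtain ⟨l, m, hl0, hl1, hlk, hm0, hm1, hmk, hlm⟩ : ∃ l m : Fin 6, 0 ≠ l ∧ 1 ≠ l ∧ k ≠ l ∧
        0 ≠ m ∧ 1 ≠ m ∧ k ≠ m ∧ l ≠ m := by
      revert k; decide
    exact no_triangle R hs hmeet huniq htri (by decide) h0 h1 hl0 hl1 hlk hm0 hm1 hmk hlm hx0 hx1
  have h13 := card_of_concurrent R x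
    (fun i => by
      obtain ⟨j, hij⟩ : ∃ j : Fin 6, i ≠ j := (exists_ne i).imp fun _ => Ne.symm
      exact three_le_card_rowsWith hcov hij _)
    hx (fun i j hij y hi hj => huniq i j hij y x hi hj (hx i) (hx j))
    (fun i => Finset.filter_subset _ S)
  omega

/-- The rows of a covering array with twelve rows and six columns. -/
def array : Fin 12 → Fin 6 → Fin 3 :=
  ![![0, 0, 0, 0, 1, 1],
    ![0, 0, 2, 1, 2, 0],
    ![0, 1, 1, 2, 2, 1],
    ![0, 2, 0, 2, 0, 0],
    ![0, 2, 1, 1, 1, 2],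
    ![1, 0, 2, 2, 2, 2],
    ![1, 1, 0, 1, 0, 2],
    ![1, 1, 1, 0, 1, 0],
    ![1, 2, 2, 0, 0, 1],
    ![2, 0, 1, 1, 0, 1],
    ![2, 1, 2, 2, 1, 0],
    ![2, 2, 0, 0, 2, 2]]

lemma array_injective : Function.Injective array := by
  unfold Function.Injective; decide

set_option maxRecDepth 10000 in
lemma array_covers : ∀ i j : Fin 6, i ≠ j → ∀ a b : Fin 3,
    ∃ r, array r i = a ∧ array r j = b := by
  decide +kernel

/-- The minimal number of Pauli settings for two-body overlapping tomography of
six qubits is exactly twelve: `φ₂(6) = 12`. -/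
theorem phi2_six : phi2 6 = 12 := by
  have hmem : 12 ∈ {N : ℕ | ∃ S : Finset (Fin 6 → Fin 3), S.card = N ∧
      ∀ i j : Fin 6, i ≠ j → ∀ a b : Fin 3, ∃ f ∈ S, f i = a ∧ f j = b} := by
    refine ⟨Finset.univ.image array, ?_, fun i j hij a b => ?_⟩
    · rw [Finset.card_image_of_injective _ array_injective, Finset.card_univ, Fintype.card_fin]
    · obtain ⟨r, h⟩ := array_covers i j hij a b
      exact ⟨array r, Finset.mem_image_of_mem _ (Finset.mem_univ r), h⟩
  refine le_antisymm (Nat.sInf_le hmem) (le_csInf ⟨12, hmem⟩ ?_)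
  rintro N ⟨S, rfl, hcov⟩
  exact lower_bound hcov
end

section
/- Let n ≥ k ≥ 1 and r ≥ k be integers, and let F be a family of k-element subsets of Fin n that admits a strong colouring with r colours, i.e., a function c : Fin n → Fin r that is injective on each member of F. Then φ_k(F) ≤ φ_k(r), where φ_k(r) is the minimal cardinality of a Pauli covering set of strength k for r qubits: copying, for each vertex, the single-qubit settings of its colour from a minimal strength-k covering set on r symbols yields a Pauli set for F of cardinality φ_k(r). -/
/-!
If `S` is an optimal Pauli set for the `k`-subsets of the `r` colours, then the functions `f ∘ c`
with `f ∈ S` form a Pauli set for `F`: for `T ∈ F` the image of `T` under `c` again has `k` elements, and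
any prescription `g` on `T` factors through `c` because `c` is injective on `T`. Distinct `f` may
give the same `f ∘ c`, so this pulled-back set has at most `S.card` elements.
-/

/-- A Pauli set for a family `F` of subsets of `Fin n`: a finite set `S` of functions
`Fin n → Fin 3` such that for every `T ∈ F` and every `g : Fin n → Fin 3` some
`f ∈ S` agrees with `g` on `T`. -/
def IsPauliFamSet {n : ℕ} (F : Finset (Finset (Fin n))) (S : Finset (Fin n → Fin 3)) :
    Prop :=
  ∀ T ∈ F, ∀ g : Fin n → Fin 3, ∃ f ∈ S, ∀ i ∈ T, f i = g i

/-- `phiFam F` is the minimum cardinality of a Pauli set for the family `F`. -/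
noncomputable def phiFam {n : ℕ} (F : Finset (Finset (Fin n))) : ℕ :=
  sInf {N : ℕ | ∃ S : Finset (Fin n → Fin 3), S.card = N ∧ IsPauliFamSet F S}

/-- `phiCA k r` is `phiFam` of the family of all `k`-element subsets of `Fin r`:
the minimal cardinality of a Pauli covering set of strength `k` for `r` qubits. -/
noncomputable def phiCA (k r : ℕ) : ℕ :=
  phiFam (Finset.powersetCard k (Finset.univ : Finset (Fin r)))

/-- If a family `F` of `k`-element subsets of `Fin n` admits a strong colouring with
`r ≥ k` colours (a map `c : Fin n → Fin r` injective on each member of `F`), then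
`φ_k(F) ≤ φ_k(r)`. -/
theorem phiFam_le_of_strong_colouring (n k r : ℕ) (hk : 1 ≤ k) (hkn : k ≤ n)
    (hkr : k ≤ r) (F : Finset (Finset (Fin n))) (hF : ∀ T ∈ F, T.card = k)
    (c : Fin n → Fin r) (hc : ∀ T ∈ F, Set.InjOn c (T : Set (Fin n))) :
    phiFam F ≤ phiCA k r := by
  classical
  -- An optimal Pauli set on the colours; the set of all functions shows that one exists.
  obtain ⟨S, hScard, hS⟩ := Nat.sInf_mem
    (s := {N : ℕ | ∃ S : Finset (Fin r → Fin 3), S.card = N ∧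
      IsPauliFamSet (Finset.powersetCard k (Finset.univ : Finset (Fin r))) S})
    ⟨_, Finset.univ, rfl, fun _ _ g => ⟨g, Finset.mem_univ g, fun _ _ => rfl⟩⟩
  have hpull : IsPauliFamSet F (S.image (fun f => f ∘ c)) := by
    intro T hT g
    -- Transport `g` to the colours along a left inverse of `c` on `T`.
    have hinv : ∃ h : Fin r → Fin 3, ∀ i ∈ T, h (c i) = g i := by
      refine ⟨fun j => if hj : ∃ i ∈ T, c i = j then g hj.choose else 0, fun i hi => ?_⟩
      have hex : ∃ i' ∈ T, c i' = c i := ⟨i, hi, rfl⟩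
      simp only [dif_pos hex]
      rw [hc T hT (Finset.mem_coe.mpr hex.choose_spec.1) (Finset.mem_coe.mpr hi)
        hex.choose_spec.2]
    obtain ⟨h, hh⟩ := hinv
    have hmem : T.image c ∈ Finset.powersetCard k (Finset.univ : Finset (Fin r)) :=
      Finset.mem_powersetCard.mpr
        ⟨Finset.subset_univ _, (Finset.card_image_of_injOn (hc T hT)).trans (hF T hT)⟩
    obtain ⟨f, hfS, hf⟩ := hS _ hmem h
    exact ⟨f ∘ c, Finset.mem_image_of_mem _ hfS, fun i hi =>
      (hf (c i) (Finset.mem_image_of_mem c hi)).trans (hh i hi)⟩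
  calc phiFam F ≤ (S.image (fun f => f ∘ c)).card := Nat.sInf_le ⟨_, rfl, hpull⟩
    _ ≤ S.card := Finset.card_image_le
    _ = phiCA k r := hScard
end
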